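/- arXiv:1802.08353 — 3 statements merged into one kernel-verified Lean document; each statement's English description precedes it below -/
import Mathlib

section
/- Let I be a *-homogeneous ideal of D. Then the set M(I) = {x ∈ D : (xD + I)* ≠ D} is a maximal *-ideal of D containing I, and it is the unique maximal *-ideal of D containing I. -/
open scoped nonZeroDivisors

/-- A star operation on the nonzero fractional ideals of an integral domain `D`
with quotient field `K`: it fixes nonzero principal fractional ideals, commutes with
multiplication by nonzero principal fractional ideals, is extensive, monotone and
idempotent (on nonzero fractional ideals). -/
structure StarOperation (D K : Type*) [CommRing D] [IsDomain D] [Field K]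
    [Algebra D K] [IsFractionRing D K] where
  star : FractionalIdeal D⁰ K → FractionalIdeal D⁰ K
  star_spanSingleton : ∀ x : K, x ≠ 0 →
    star (FractionalIdeal.spanSingleton D⁰ x) = FractionalIdeal.spanSingleton D⁰ x
  star_smul : ∀ (x : K) (I : FractionalIdeal D⁰ K), x ≠ 0 → I ≠ 0 →
    star (FractionalIdeal.spanSingleton D⁰ x * I) = FractionalIdeal.spanSingleton D⁰ x * star I
  le_star : ∀ I : FractionalIdeal D⁰ K, I ≠ 0 → I ≤ star I
  star_mono : ∀ I J : FractionalIdeal D⁰ K, I ≠ 0 → J ≠ 0 → I ≤ J → star I ≤ star J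
  star_idem : ∀ I : FractionalIdeal D⁰ K, I ≠ 0 → star (star I) = star I

namespace StarOperation

variable {D K : Type*} [CommRing D] [IsDomain D] [Field K] [Algebra D K] [IsFractionRing D K]
variable (s : StarOperation D K)

/-- `*` has finite character: for every nonzero fractional ideal `I`, `I^*` is the union
of `J^*` over the nonzero finitely generated fractional subideals `J` of `I`. -/
def FiniteCharacter : Prop :=
  ∀ I : FractionalIdeal D⁰ K, I ≠ 0 → ∀ x ∈ s.star I,
    ∃ J : FractionalIdeal D⁰ K, J ≠ 0 ∧ (J : Submodule D K).FG ∧ J ≤ I ∧ x ∈ s.star J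

/-- A (nonzero) integral ideal `I` of `D` is a `*`-ideal if `I^* = I`. -/
def IsStarIdeal (I : Ideal D) : Prop :=
  I ≠ ⊥ ∧ s.star (I : FractionalIdeal D⁰ K) = (I : FractionalIdeal D⁰ K)

/-- An integral ideal `I` of `D` is a `*`-ideal of finite type if `I = J^*` for some
nonzero finitely generated ideal `J`. -/
def IsFiniteTypeStarIdeal (I : Ideal D) : Prop :=
  ∃ J : Ideal D, J ≠ ⊥ ∧ J.FG ∧
    s.star (J : FractionalIdeal D⁰ K) = (I : FractionalIdeal D⁰ K)

/-- A maximal `*`-ideal: maximal among proper integral `*`-ideals. -/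
def IsMaxStarIdeal (M : Ideal D) : Prop :=
  M ≠ ⊤ ∧ s.IsStarIdeal M ∧ ∀ J : Ideal D, J ≠ ⊤ → s.IsStarIdeal J → M ≤ J → J = M

/-- `I` is `*`-homogeneous: a proper `*`-ideal of finite type such that `(J + J')^* ≠ D`
for every pair `J`, `J'` of proper `*`-ideals of finite type containing `I`. -/
def IsHomog (I : Ideal D) : Prop :=
  I ≠ ⊤ ∧ s.IsStarIdeal I ∧ s.IsFiniteTypeStarIdeal I ∧
    ∀ J J' : Ideal D, J ≠ ⊤ → J' ≠ ⊤ → s.IsStarIdeal J → s.IsStarIdeal J' →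
      s.IsFiniteTypeStarIdeal J → s.IsFiniteTypeStarIdeal J' → I ≤ J → I ≤ J' →
      s.star ((J + J' : Ideal D) : FractionalIdeal D⁰ K) ≠ 1

/-- The set `M(I) = {x ∈ D : (xD + I)^* ≠ D}` attached to an ideal `I`. -/
def MSet (I : Ideal D) : Set D :=
  {x : D | s.star ((Ideal.span {x} + I : Ideal D) : FractionalIdeal D⁰ K) ≠ 1}

/-- `A` and `B` are `*`-comaximal if `(A + B)^* = D`. -/
def StarComaximal (A B : Ideal D) : Prop :=
  s.star ((A + B : Ideal D) : FractionalIdeal D⁰ K) = 1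

/-- An integral ideal `I` is `*`-invertible if `(I · I⁻¹)^* = D`. -/
def StarInvertible (I : Ideal D) : Prop :=
  s.star ((I : FractionalIdeal D⁰ K) * (I : FractionalIdeal D⁰ K)⁻¹) = 1

/-- `D` is a `*`-SH domain: every principal ideal generated by a nonzero nonunit is a
`*`-product of finitely many `*`-homogeneous ideals. -/
def IsSHDomain : Prop :=
  ∀ x : D, x ≠ 0 → ¬IsUnit x →
    ∃ T : Multiset (Ideal D), (∀ J ∈ T, s.IsHomog J) ∧
      s.star ((T.prod : Ideal D) : FractionalIdeal D⁰ K) =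
        ((Ideal.span {x} : Ideal D) : FractionalIdeal D⁰ K)

/-- `D` has finite `*`-character: every nonzero nonunit lies in only finitely many
maximal `*`-ideals. -/
def FiniteStarCharacter : Prop :=
  ∀ x : D, x ≠ 0 → ¬IsUnit x → {P : Ideal D | s.IsMaxStarIdeal P ∧ x ∈ P}.Finite

end StarOperation

namespace StarOperation

theorem exists_cl {D K : Type*} [CommRing D] [IsDomain D] [Field K] [Algebra D K]
    [IsFractionRing D K] (s : StarOperation D K) (A : Ideal D) :
    ∃ B : Ideal D, A ≠ ⊥ → (B : FractionalIdeal D⁰ K) = s.star (A : FractionalIdeal D⁰ K) := by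
  by_cases hA : A = ⊥
  · exact ⟨⊥, fun h => absurd hA h⟩
  have h1 : s.star (1 : FractionalIdeal D⁰ K) = 1 := by
    have := s.star_spanSingleton 1 one_ne_zero
    simpa using this
  have h2 : s.star (A : FractionalIdeal D⁰ K) ≤ 1 := by
    rw [← h1]
    exact s.star_mono _ _ (FractionalIdeal.coeIdeal_ne_zero.mpr hA) one_ne_zero
      FractionalIdeal.coeIdeal_le_one
  obtain ⟨B, hB⟩ := FractionalIdeal.le_one_iff_exists_coeIdeal.mp h2
  exact ⟨B, fun _ => hB⟩

/-- The integral ideal underlying the star closure. -/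
noncomputable def cl {D K : Type*} [CommRing D] [IsDomain D] [Field K] [Algebra D K]
    [IsFractionRing D K] (s : StarOperation D K) (A : Ideal D) : Ideal D :=
  (s.exists_cl A).choose

section
variable {D K : Type*} [CommRing D] [IsDomain D] [Field K] [Algebra D K] [IsFractionRing D K]
variable (s : StarOperation D K)

theorem coe_cl {A : Ideal D} (hA : A ≠ ⊥) :
    (s.cl A : FractionalIdeal D⁰ K) = s.star (A : FractionalIdeal D⁰ K) :=
  (s.exists_cl A).choose_spec hA

theorem le_cl {A : Ideal D} (hA : A ≠ ⊥) : A ≤ s.cl A := by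
  rw [← FractionalIdeal.coeIdeal_le_coeIdeal K, s.coe_cl hA]
  exact s.le_star _ (FractionalIdeal.coeIdeal_ne_zero.mpr hA)

theorem cl_ne_bot {A : Ideal D} (hA : A ≠ ⊥) : s.cl A ≠ ⊥ :=
  ne_bot_of_le_ne_bot hA (s.le_cl hA)

theorem cl_mono {A B : Ideal D} (hA : A ≠ ⊥) (h : A ≤ B) : s.cl A ≤ s.cl B := by
  have hB : B ≠ ⊥ := ne_bot_of_le_ne_bot hA h
  rw [← FractionalIdeal.coeIdeal_le_coeIdeal K, s.coe_cl hA, s.coe_cl hB]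
  exact s.star_mono _ _ (FractionalIdeal.coeIdeal_ne_zero.mpr hA)
    (FractionalIdeal.coeIdeal_ne_zero.mpr hB) ((FractionalIdeal.coeIdeal_le_coeIdeal K).mpr h)

theorem cl_star {A : Ideal D} (hA : A ≠ ⊥) : s.IsStarIdeal (s.cl A) := by
  refine ⟨s.cl_ne_bot hA, ?_⟩
  rw [s.coe_cl hA, s.star_idem _ (FractionalIdeal.coeIdeal_ne_zero.mpr hA)]

theorem cl_eq {A : Ideal D} (hA : s.IsStarIdeal A) : s.cl A = A := by
  apply FractionalIdeal.coeIdeal_injective (K := K)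
  exact (s.coe_cl hA.1).trans hA.2

theorem cl_le {A B : Ideal D} (hA : A ≠ ⊥) (hB : s.IsStarIdeal B) (h : A ≤ B) : s.cl A ≤ B := by
  have := s.cl_mono hA h
  rwa [s.cl_eq hB] at this

theorem star_eq_one {A : Ideal D} (hA : A ≠ ⊥) :
    s.star (A : FractionalIdeal D⁰ K) = 1 ↔ s.cl A = ⊤ := by
  rw [← s.coe_cl hA, ← Ideal.one_eq_top]
  exact FractionalIdeal.coeIdeal_eq_one

theorem mem_cl (hs : s.FiniteCharacter) {A : Ideal D} (hA : A ≠ ⊥) {x : D} (hx : x ∈ s.cl A) :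
    ∃ B : Ideal D, B ≠ ⊥ ∧ B.FG ∧ B ≤ A ∧ x ∈ s.cl B := by
  have hx' : algebraMap D K x ∈ s.star (A : FractionalIdeal D⁰ K) := by
    rw [← s.coe_cl hA]
    exact FractionalIdeal.mem_coeIdeal_of_mem _ hx
  obtain ⟨J, hJ0, hJ, hJA, hxJ⟩ := hs _ (FractionalIdeal.coeIdeal_ne_zero.mpr hA) _ hx'
  obtain ⟨B, rfl⟩ := FractionalIdeal.le_one_iff_exists_coeIdeal.mp
    (hJA.trans FractionalIdeal.coeIdeal_le_one)
  have hB : B ≠ ⊥ := FractionalIdeal.coeIdeal_ne_zero.mp hJ0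
  refine ⟨B, hB, ?_, (FractionalIdeal.coeIdeal_le_coeIdeal K).mp hJA, ?_⟩
  · exact (FractionalIdeal.coeIdeal_fg _ (IsFractionRing.injective D K) B).mp hJ
  · rw [← s.coe_cl hB] at hxJ
    obtain ⟨y, hy, hyx⟩ := (FractionalIdeal.mem_coeIdeal _).mp hxJ
    rwa [← IsFractionRing.injective D K hyx]

theorem ne_bot_sup {I : Ideal D} (hI : I ≠ ⊥) (F : Ideal D) : F ⊔ I ≠ ⊥ :=
  ne_bot_of_le_ne_bot hI le_sup_right

theorem finType {I : Ideal D} (hI : s.IsHomog I) {F : Ideal D} (hF : F.FG) :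
    s.IsFiniteTypeStarIdeal (s.cl (F ⊔ I)) := by
  obtain ⟨-, hI1, ⟨J, hJ0, hJ, hJI⟩, -⟩ := hI
  have hJI' : s.cl J = I := by
    apply FractionalIdeal.coeIdeal_injective (K := K)
    exact (s.coe_cl hJ0).trans hJI
  have hFJ := ne_bot_sup hJ0 F
  refine ⟨F ⊔ J, hFJ, Submodule.FG.sup hF hJ, ?_⟩
  rw [← s.coe_cl hFJ]
  congr 1
  apply le_antisymm
  · exact s.cl_mono hFJ (sup_le_sup_left (hJI' ▸ s.le_cl hJ0) _)
  · refine s.cl_le (ne_bot_sup hI1.1 F) (s.cl_star hFJ) (sup_le ?_ ?_)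
    · exact le_sup_left.trans (s.le_cl hFJ)
    · rw [← hJI']
      exact s.cl_mono hJ0 le_sup_right

theorem key {I : Ideal D} (hI : s.IsHomog I) {F G : Ideal D} (hF : F.FG) (hG : G.FG)
    (h1 : s.cl (F ⊔ I) ≠ ⊤) (h2 : s.cl (G ⊔ I) ≠ ⊤) : s.cl ((F ⊔ G) ⊔ I) ≠ ⊤ := by
  have h0 := hI.2.1.1
  have hF0 := ne_bot_sup h0 F
  have hG0 := ne_bot_sup h0 G
  have hFG0 := ne_bot_sup h0 (F ⊔ G)
  have h := hI.2.2.2 _ _ h1 h2 (s.cl_star hF0) (s.cl_star hG0) (s.finType hI hF) (s.finType hI hG)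
    (le_sup_right.trans (s.le_cl hF0)) (le_sup_right.trans (s.le_cl hG0))
  rw [Submodule.add_eq_sup] at h
  have hs0 := ne_bot_sup (s.cl_ne_bot hG0) (s.cl (F ⊔ I))
  intro ht
  apply h
  rw [s.star_eq_one hs0, eq_top_iff, ← ht]
  refine s.cl_mono hFG0 (sup_le (sup_le ?_ ?_) ?_)
  · exact (le_sup_left.trans (s.le_cl hF0)).trans le_sup_left
  · exact (le_sup_left.trans (s.le_cl hG0)).trans le_sup_right
  · exact (le_sup_right.trans (s.le_cl hG0)).trans le_sup_right

theorem mem_MSet {I : Ideal D} (h0 : I ≠ ⊥) {x : D} :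
    x ∈ s.MSet I ↔ s.cl (Ideal.span {x} ⊔ I) ≠ ⊤ := by
  rw [MSet, Set.mem_ofPred_eq, Submodule.add_eq_sup, ne_eq, s.star_eq_one (ne_bot_sup h0 _)]

theorem fg_MSet {I : Ideal D} (hI : s.IsHomog I) (T : Finset D) (hT : ∀ x ∈ T, x ∈ s.MSet I) :
    s.cl (Ideal.span (T : Set D) ⊔ I) ≠ ⊤ := by
  classical
  induction T using Finset.induction_on with
  | empty =>
    simp only [Finset.coe_empty, Ideal.span_empty, bot_sup_eq]
    rw [s.cl_eq hI.2.1]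
    exact hI.1
  | insert a T ha ih =>
    rw [Finset.coe_insert, Ideal.span_insert]
    refine s.key hI ⟨{a}, by simp⟩ ⟨T, rfl⟩ ?_ (ih fun x hx => hT x (Finset.mem_insert_of_mem hx))
    exact (s.mem_MSet hI.2.1.1).mp (hT a (Finset.mem_insert_self _ _))

theorem ne_top_mono {A B : Ideal D} (hA : A ≠ ⊥) (h : A ≤ B) (hB : s.cl B ≠ ⊤) : s.cl A ≠ ⊤ :=
  ne_top_of_le_ne_top hB (s.cl_mono hA h)

end

end StarOperation

/-- Let `I` be a `*`-homogeneous ideal of `D`. Then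
`M(I) = {x ∈ D : (xD + I)^* ≠ D}` is a maximal `*`-ideal of `D` containing `I`, and it is
the unique maximal `*`-ideal of `D` containing `I`. -/
theorem MSet_isMaxStarIdeal {D K : Type*} [CommRing D] [IsDomain D] [Field K] [Algebra D K]
    [IsFractionRing D K] (s : StarOperation D K) (hs : s.FiniteCharacter)
    (I : Ideal D) (hI : s.IsHomog I) :
    ∃ M : Ideal D, (M : Set D) = s.MSet I ∧ s.IsMaxStarIdeal M ∧ I ≤ M ∧
      ∀ M' : Ideal D, s.IsMaxStarIdeal M' → I ≤ M' → M' = M := by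
  have h0 := hI.2.1.1
  let M : Ideal D :=
    { carrier := s.MSet I
      zero_mem' := by
        rw [s.mem_MSet h0]
        simpa [s.cl_eq hI.2.1] using hI.1
      add_mem' := by
        intro x y hx hy
        rw [s.mem_MSet h0] at hx hy ⊢
        refine s.ne_top_mono (StarOperation.ne_bot_sup h0 _) (sup_le_sup_right ?_ I)
          (s.key hI ⟨{x}, by simp⟩ ⟨{y}, by simp⟩ hx hy)
        rw [Ideal.span_singleton_le_iff_mem]
        exact add_mem (Ideal.mem_sup_left (Ideal.mem_span_singleton_self x))
          (Ideal.mem_sup_right (Ideal.mem_span_singleton_self y))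
      smul_mem' := by
        intro a x hx
        rw [s.mem_MSet h0] at hx ⊢
        refine s.ne_top_mono (StarOperation.ne_bot_sup h0 _) (sup_le_sup_right ?_ I) hx
        rw [Ideal.span_singleton_le_iff_mem]
        exact Ideal.mul_mem_left _ a (Ideal.mem_span_singleton_self x) }
  have hM : ∀ x, x ∈ M ↔ s.cl (Ideal.span {x} ⊔ I) ≠ ⊤ := fun x => s.mem_MSet h0
  have hle : ∀ J : Ideal D, J ≠ ⊤ → s.IsStarIdeal J → I ≤ J → J ≤ M := by
    intro J hJ hJs hIJ x hx
    rw [hM]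
    refine ne_top_of_le_ne_top hJ (s.cl_le (StarOperation.ne_bot_sup h0 _) hJs (sup_le ?_ hIJ))
    rwa [Ideal.span_singleton_le_iff_mem]
  have hIM : I ≤ M := hle I hI.1 hI.2.1 le_rfl
  have hM0 : M ≠ ⊥ := ne_bot_of_le_ne_bot h0 hIM
  have hMt : M ≠ ⊤ := by
    rw [Ideal.ne_top_iff_one, hM]
    intro h
    apply h
    rw [eq_top_iff]
    refine le_trans ?_ (s.le_cl (StarOperation.ne_bot_sup h0 _))
    simp
  have hMs : s.IsStarIdeal M := by
    have : s.cl M = M := by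
      refine le_antisymm ?_ (s.le_cl hM0)
      intro x hx
      obtain ⟨B, hB0, ⟨T, rfl⟩, hBM, hxB⟩ := s.mem_cl hs hM0 hx
      rw [hM]
      have hT := s.fg_MSet hI T (fun x hx => hBM (Ideal.subset_span hx))
      have hT0 := StarOperation.ne_bot_sup h0 (Ideal.span (T : Set D))
      refine ne_top_of_le_ne_top hT
        (s.cl_le (StarOperation.ne_bot_sup h0 _) (s.cl_star hT0) (sup_le ?_ ?_))
      · rw [Ideal.span_singleton_le_iff_mem]
        exact s.cl_mono hB0 le_sup_left hxB
      · exact le_sup_right.trans (s.le_cl hT0)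
    rw [← this]
    exact s.cl_star hM0
  refine ⟨M, rfl, ⟨hMt, hMs, ?_⟩, hIM, ?_⟩
  · intro J hJ hJs hMJ
    exact le_antisymm (hle J hJ hJs (hIM.trans hMJ)) hMJ
  · intro M' hM' hIM'
    exact (hM'.2.2 M hMt hMs (hle M' hM'.1 hM'.2.1 hIM')).symm
end

section
/- A nonzero proper *-ideal I of finite type is *-homogeneous if and only if I is contained in exactly one maximal *-ideal of D. -/
open scoped nonZeroDivisors

namespace StarOperation

variable {D K : Type*} [CommRing D] [IsDomain D] [Field K] [Algebra D K] [IsFractionRing D K]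
variable (s : StarOperation D K)

theorem star_one_aux : s.star 1 = 1 := by
  have h := s.star_spanSingleton 1 one_ne_zero
  rwa [FractionalIdeal.spanSingleton_one] at h

/-- The closure of a nonzero integral ideal is an integral ideal. -/
theorem exists_closure (A : Ideal D) (hA : A ≠ ⊥) :
    ∃ B : Ideal D, s.star (A : FractionalIdeal D⁰ K) = (B : FractionalIdeal D⁰ K) ∧
      A ≤ B ∧ s.IsStarIdeal B := by
  have hA' : (A : FractionalIdeal D⁰ K) ≠ 0 := FractionalIdeal.coeIdeal_ne_zero.2 hA
  have h1 : s.star (A : FractionalIdeal D⁰ K) ≤ 1 := by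
    have h := s.star_mono _ 1 hA' one_ne_zero FractionalIdeal.coeIdeal_le_one
    rwa [s.star_one_aux] at h
  obtain ⟨B, hB⟩ := FractionalIdeal.le_one_iff_exists_coeIdeal.1 h1
  have hAB : A ≤ B := by
    have h := s.le_star _ hA'
    rw [← hB] at h
    exact (FractionalIdeal.coeIdeal_le_coeIdeal K).1 h
  refine ⟨B, hB.symm, hAB, fun h => hA (le_bot_iff.1 (h ▸ hAB)), ?_⟩
  rw [hB, s.star_idem _ hA']

theorem closure_le {A B M : Ideal D} (hA : A ≠ ⊥) (hM : s.IsStarIdeal M) (h : A ≤ M)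
    (hB : s.star (A : FractionalIdeal D⁰ K) = (B : FractionalIdeal D⁰ K)) : B ≤ M := by
  have h1 := s.star_mono _ _ (FractionalIdeal.coeIdeal_ne_zero.2 hA)
    (FractionalIdeal.coeIdeal_ne_zero.2 hM.1) ((FractionalIdeal.coeIdeal_le_coeIdeal K).2 h)
  rw [hB, hM.2] at h1
  exact (FractionalIdeal.coeIdeal_le_coeIdeal K).1 h1

theorem exists_fg (hs : s.FiniteCharacter) {A : Ideal D} (hA : A ≠ ⊥) {x : D}
    (hx : algebraMap D K x ∈ s.star (A : FractionalIdeal D⁰ K)) :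
    ∃ F : Ideal D, F ≠ ⊥ ∧ F.FG ∧ F ≤ A ∧
      algebraMap D K x ∈ s.star (F : FractionalIdeal D⁰ K) := by
  obtain ⟨J, hJ0, hJfg, hJA, hxJ⟩ := hs _ (FractionalIdeal.coeIdeal_ne_zero.2 hA) _ hx
  obtain ⟨F, rfl⟩ := FractionalIdeal.le_one_iff_exists_coeIdeal.1
    (hJA.trans FractionalIdeal.coeIdeal_le_one)
  exact ⟨F, FractionalIdeal.coeIdeal_ne_zero.1 hJ0,
    (FractionalIdeal.coeIdeal_fg D⁰ (IsFractionRing.injective D K) F).1 hJfg,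
    (FractionalIdeal.coeIdeal_le_coeIdeal K).1 hJA, hxJ⟩

theorem mem_of_algebraMap_mem {B : Ideal D} {x : D}
    (h : algebraMap D K x ∈ (B : FractionalIdeal D⁰ K)) : x ∈ B := by
  obtain ⟨y, hy, hyx⟩ := (FractionalIdeal.mem_coeIdeal D⁰).1 h
  exact IsFractionRing.injective D K hyx ▸ hy

theorem exists_maxStarIdeal (hs : s.FiniteCharacter) (I : Ideal D) (hI : I ≠ ⊤)
    (hst : s.IsStarIdeal I) : ∃ M, s.IsMaxStarIdeal M ∧ I ≤ M := by
  obtain ⟨M, hIM, hM⟩ := zorn_le_nonempty₀ {J : Ideal D | J ≠ ⊤ ∧ s.IsStarIdeal J} (by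
    intro c hc hch y hy
    have hdir := hch.directedOn
    refine ⟨sSup c, ⟨?_, ?_, ?_⟩, fun z hz => le_sSup hz⟩
    · intro h
      have h1 : (1 : D) ∈ sSup c := h ▸ Submodule.mem_top
      obtain ⟨z, hz, h1z⟩ := (Submodule.mem_sSup_of_directed ⟨y, hy⟩ hdir).1 h1
      exact (hc hz).1 ((Ideal.eq_top_iff_one z).2 h1z)
    · intro h
      exact (hc hy).2.1 (le_bot_iff.1 (h ▸ le_sSup hy))
    · have hne : sSup c ≠ ⊥ := fun h => (hc hy).2.1 (le_bot_iff.1 (h ▸ le_sSup hy))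
      obtain ⟨B, hB, hcB, -⟩ := s.exists_closure (sSup c) hne
      rw [hB]
      congr 1
      refine le_antisymm ?_ hcB
      intro x hx
      have hx' : algebraMap D K x ∈ s.star ((sSup c : Ideal D) : FractionalIdeal D⁰ K) := by
        rw [hB]; exact FractionalIdeal.mem_coeIdeal_of_mem D⁰ hx
      obtain ⟨F, hF0, hFfg, hFc, hxF⟩ := s.exists_fg hs hne hx'
      obtain ⟨z, hz, hFz⟩ := (CompleteLattice.isCompactElement_iff_le_of_directed_sSup_le (Ideal D) F).1
        ((Submodule.fg_iff_compact F).1 hFfg) c ⟨y, hy⟩ hdir hFc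
      obtain ⟨G, hG, -, -⟩ := s.exists_closure F hF0
      rw [hG] at hxF
      exact le_sSup hz (s.closure_le hF0 (hc hz).2 hFz hG (mem_of_algebraMap_mem hxF)))
    I ⟨hI, hst⟩
  exact ⟨M, ⟨hM.1.1, hM.1.2, fun J hJ hJs h => le_antisymm (hM.2 ⟨hJ, hJs⟩ h) h⟩, hIM⟩

theorem fg_split {F M N : Ideal D} (hF : F.FG) (h : F ≤ M ⊔ N) :
    ∃ A B : Ideal D, A.FG ∧ B.FG ∧ A ≤ M ∧ B ≤ N ∧ F ≤ A ⊔ B := by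
  classical
  obtain ⟨t, rfl⟩ := hF
  have h' : ∀ x : D, ∃ a b : D, x ∈ t → a ∈ M ∧ b ∈ N ∧ a + b = x := by
    intro x
    by_cases hx : x ∈ t
    · obtain ⟨a, ha, b, hb, hab⟩ := Submodule.mem_sup.1 (h (Submodule.subset_span hx))
      exact ⟨a, b, fun _ => ⟨ha, hb, hab⟩⟩
    · exact ⟨0, 0, fun h => (hx h).elim⟩
  choose a b hab using h'
  refine ⟨Ideal.span (t.image a : Finset D), Ideal.span (t.image b : Finset D),
    ⟨_, rfl⟩, ⟨_, rfl⟩, ?_, ?_, ?_⟩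
  · refine Ideal.span_le.2 fun y hy => ?_
    obtain ⟨x, hx, rfl⟩ := Finset.mem_image.1 hy
    exact (hab x hx).1
  · refine Ideal.span_le.2 fun y hy => ?_
    obtain ⟨x, hx, rfl⟩ := Finset.mem_image.1 hy
    exact (hab x hx).2.1
  · refine Submodule.span_le.2 fun x hx => ?_
    have hx' : x ∈ t := hx
    exact Submodule.mem_sup.2 ⟨a x, Ideal.subset_span (Finset.mem_image_of_mem a hx'), b x,
      Ideal.subset_span (Finset.mem_image_of_mem b hx'), (hab x hx').2.2⟩

end StarOperation

/-- A nonzero proper `*`-ideal `I` of finite type is `*`-homogeneous if and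
only if `I` is contained in exactly one maximal `*`-ideal of `D`. -/
theorem isHomog_iff_unique_maxStarIdeal {D K : Type*} [CommRing D] [IsDomain D] [Field K]
    [Algebra D K] [IsFractionRing D K] (s : StarOperation D K) (hs : s.FiniteCharacter)
    (I : Ideal D) (h0 : I ≠ ⊥) (hproper : I ≠ ⊤) (hstar : s.IsStarIdeal I)
    (hft : s.IsFiniteTypeStarIdeal I) :
    s.IsHomog I ↔ ∃! M : Ideal D, s.IsMaxStarIdeal M ∧ I ≤ M := by
  have bot_of : ∀ {A B : Ideal D}, A ≠ ⊥ → A ≤ B → B ≠ ⊥ :=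
    fun hA h hB => hA (le_bot_iff.1 (hB ▸ h))
  constructor
  · rintro ⟨-, -, -, hH⟩
    obtain ⟨M, hM, hIM⟩ := s.exists_maxStarIdeal hs I hproper hstar
    refine ⟨M, ⟨hM, hIM⟩, ?_⟩
    rintro N ⟨hN, hIN⟩
    by_contra hne
    have hMN : M ⊔ N ≠ ⊥ := bot_of hM.2.1.1 le_sup_left
    obtain ⟨B, hB, hMB, hBs⟩ := s.exists_closure (M ⊔ N) hMN
    have hBtop : B = ⊤ := by
      by_contra hBt
      have h1 := hM.2.2 B hBt hBs (le_sup_left.trans hMB)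
      have h2 := hN.2.2 B hBt hBs (le_sup_right.trans hMB)
      exact hne (h2.symm.trans h1)
    have h1 : algebraMap D K 1 ∈ s.star ((M ⊔ N : Ideal D) : FractionalIdeal D⁰ K) := by
      rw [hB, hBtop]
      exact FractionalIdeal.mem_coeIdeal_of_mem D⁰ Submodule.mem_top
    obtain ⟨F, hF0, hFfg, hFle, h1F⟩ := s.exists_fg hs hMN h1
    obtain ⟨A, A', hA, hA', hAM, hAN, hFA⟩ := StarOperation.fg_split hFfg hFle
    obtain ⟨I0, hI0, hI0fg, hI0I⟩ := hft
    have hI0le : I0 ≤ I := by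
      have h := s.le_star _ (FractionalIdeal.coeIdeal_ne_zero.2 hI0)
      rw [hI0I] at h
      exact (FractionalIdeal.coeIdeal_le_coeIdeal K).1 h
    have n1 : I0 ⊔ A ≠ ⊥ := bot_of hI0 le_sup_left
    have n2 : I0 ⊔ A' ≠ ⊥ := bot_of hI0 le_sup_left
    obtain ⟨J, hJ, hJle, hJs⟩ := s.exists_closure (I0 ⊔ A) n1
    obtain ⟨J', hJ', hJle', hJs'⟩ := s.exists_closure (I0 ⊔ A') n2
    have hJM : J ≤ M := s.closure_le n1 hM.2.1 (sup_le (hI0le.trans hIM) hAM) hJ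
    have hJN : J' ≤ N := s.closure_le n2 hN.2.1 (sup_le (hI0le.trans hIN) hAN) hJ'
    refine hH J J' (fun h => hM.1 (top_le_iff.1 (h ▸ hJM)))
      (fun h => hN.1 (top_le_iff.1 (h ▸ hJN))) hJs hJs'
      ⟨_, n1, Submodule.FG.sup hI0fg hA, hJ⟩ ⟨_, n2, Submodule.FG.sup hI0fg hA', hJ'⟩
      (s.closure_le hI0 hJs (le_sup_left.trans hJle) hI0I)
      (s.closure_le hI0 hJs' (le_sup_left.trans hJle') hI0I) ?_
    have n3 : J + J' ≠ ⊥ := bot_of hJs.1 le_sup_left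
    obtain ⟨C, hC, hCle, hCs⟩ := s.exists_closure (J + J') n3
    obtain ⟨G, hG, -, -⟩ := s.exists_closure F hF0
    have hFJ : F ≤ J + J' := hFA.trans
      (sup_le_sup (le_sup_right.trans hJle) (le_sup_right.trans hJle'))
    rw [hG] at h1F
    have h1C : (1 : D) ∈ C :=
      s.closure_le hF0 hCs (hFJ.trans hCle) hG (StarOperation.mem_of_algebraMap_mem h1F)
    rw [hC, (Ideal.eq_top_iff_one C).2 h1C, FractionalIdeal.coeIdeal_top]
  · rintro ⟨M, ⟨hM, hIM⟩, huniq⟩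
    refine ⟨hproper, hstar, hft, ?_⟩
    intro J J' hJ hJ' hJs hJs' _ _ hIJ hIJ' h1
    obtain ⟨N, hN, hJN⟩ := s.exists_maxStarIdeal hs J hJ hJs
    obtain ⟨N', hN', hJN'⟩ := s.exists_maxStarIdeal hs J' hJ' hJs'
    obtain rfl := huniq N ⟨hN, hIJ.trans hJN⟩
    obtain rfl := huniq N' ⟨hN', hIJ'.trans hJN'⟩
    have n3 : J + J' ≠ ⊥ := bot_of hJs.1 le_sup_left
    rw [← FractionalIdeal.coeIdeal_top] at h1
    exact hM.1 (top_le_iff.1 (s.closure_le n3 hM.2.1 (sup_le hJN hJN') h1))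
end

section
/- Let I be a *-homogeneous ideal of D. Then I·D_{M(I)} ∩ D = I, i.e., the contraction to D of the extension of I to the localization of D at the prime ideal M(I) equals I. -/
open scoped nonZeroDivisors

/-- Let `I` be a `*`-homogeneous ideal of `D`, and let `M` be the (prime)
maximal `*`-ideal `M(I)`. Then `I·D_M ∩ D = I`, i.e. the contraction to `D` of the
extension of `I` to the localization of `D` at `M` equals `I`. -/
theorem homog_localization_contraction {D K : Type*} [CommRing D] [IsDomain D] [Field K]
    [Algebra D K] [IsFractionRing D K] (s : StarOperation D K) (hs : s.FiniteCharacter)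
    (I : Ideal D) (hI : s.IsHomog I) (M : Ideal D) [M.IsPrime]
    (hM : (M : Set D) = s.MSet I) :
    Ideal.comap (algebraMap D (Localization.AtPrime M))
      (Ideal.map (algebraMap D (Localization.AtPrime M)) I) = I := by
  obtain ⟨-, ⟨hI0, hIs⟩, -, -⟩ := hI
  refine le_antisymm ?_ Ideal.le_comap_map
  intro y hy
  rw [Ideal.mem_comap,
    IsLocalization.algebraMap_mem_map_algebraMap_iff M.primeCompl] at hy
  obtain ⟨t, ht, hty⟩ := hy
  by_cases hy0 : y = 0
  · simp [hy0]
  have htM : t ∉ s.MSet I := by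
    rw [← hM]
    exact ht
  have h1 : s.star ((Ideal.span {t} + I : Ideal D) : FractionalIdeal D⁰ K) = 1 := by
    by_contra h
    exact htM h
  have hJ0 : (Ideal.span {t} + I : Ideal D) ≠ ⊥ := by
    intro h
    apply hI0
    rw [eq_bot_iff, ← h]
    exact le_sup_right
  have hyK : algebraMap D K y ≠ 0 := by
    simpa using hy0
  have hJK : ((Ideal.span {t} + I : Ideal D) : FractionalIdeal D⁰ K) ≠ 0 :=
    FractionalIdeal.coeIdeal_ne_zero.mpr hJ0
  have hIK : (I : FractionalIdeal D⁰ K) ≠ 0 := FractionalIdeal.coeIdeal_ne_zero.mpr hI0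
  have h2 := s.star_smul (algebraMap D K y) _ hyK hJK
  rw [h1, mul_one] at h2
  have hle : FractionalIdeal.spanSingleton D⁰ (algebraMap D K y) *
      ((Ideal.span {t} + I : Ideal D) : FractionalIdeal D⁰ K) ≤ (I : FractionalIdeal D⁰ K) := by
    rw [← FractionalIdeal.coeIdeal_span_singleton, ← FractionalIdeal.coeIdeal_mul,
      FractionalIdeal.coeIdeal_le_coeIdeal, mul_add, Ideal.span_singleton_mul_span_singleton]
    refine sup_le ?_ Ideal.mul_le_right
    rw [Ideal.span_singleton_le_iff_mem, mul_comm]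
    exact hty
  have hne : FractionalIdeal.spanSingleton D⁰ (algebraMap D K y) *
      ((Ideal.span {t} + I : Ideal D) : FractionalIdeal D⁰ K) ≠ 0 := by
    rw [← FractionalIdeal.coeIdeal_span_singleton, ← FractionalIdeal.coeIdeal_mul]
    refine FractionalIdeal.coeIdeal_ne_zero.mpr (mul_ne_zero ?_ hJ0)
    simpa using hy0
  have h3 := s.star_mono _ _ hne hIK hle
  rw [h2, hIs, ← FractionalIdeal.coeIdeal_span_singleton,
    FractionalIdeal.coeIdeal_le_coeIdeal, Ideal.span_singleton_le_iff_mem] at h3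
  exact h3
end
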